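/- Let n ≥ 1, h > 0, α = √((n+1)/n), γ = (1/n)(1 ± 1/√(n+1)), V = α(I − γ·e·eᵀ), and V₊ = [V, −V·e] with columns v₁, …, v_{n+1}. Let x₀ ∈ ℝⁿ, h > 0, and for each j = 1, …, n+1 let x_j = x₀ + h·v_j. Suppose f : ℝⁿ → ℝ is continuously differentiable on an open set containing the closed ball of radius h centered at x₀ with ∇f Lipschitz continuous there with constant L > 0. Then the vector δf₊ ∈ ℝ^{n+1} with entries f(x_j) − f(x₀) satisfies ‖δf₊ − h·V₊ᵀ·∇f(x₀)‖₂ ≤ (1/2)·L·h²·√(n+1). -/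

import Mathlib

open Matrix

/-!
Along the segment from `x₀` to `x` the derivative of the Taylor remainder of `f` at time `t` is at
most `L t ‖x - x₀‖²` in norm, so the remainder itself is at most `L / 2 * ‖x - x₀‖²`. The columns of
`V₊` are unit vectors, so every vertex has `‖x_j - x₀‖ = h`: each of the `n + 1` entries of the
residual is at most `L h² / 2`, which costs a factor `√(n + 1)` in the Euclidean norm.
-/

section Taylor

variable {E F : Type*} [NormedAddCommGroup E] [NormedAddCommGroup F] [NormedSpace ℝ F]
  {s : Set E} {x₀ x : E} {L : ℝ}

theorem norm_image_sub_sub_le_of_norm_hasDerivWithinAt_sub_le_segment_01 {f f' : ℝ → F} {C : ℝ}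
    (hf : ∀ t ∈ Set.Icc (0 : ℝ) 1, HasDerivWithinAt f (f' t) (Set.Icc 0 1) t)
    (hf' : ∀ t ∈ Set.Ico (0 : ℝ) 1, ‖f' t - f' 0‖ ≤ C * t) :
    ‖f 1 - f 0 - f' 0‖ ≤ C / 2 := by
  let remainder : ℝ → F := fun t ↦ f t - f 0 - t • f' 0
  have hasDeriv_remainder : ∀ t ∈ Set.Icc (0 : ℝ) 1,
      HasDerivWithinAt remainder (f' t - f' 0) (Set.Icc 0 1) t := fun t ht ↦
    (((hf t ht).sub_const (f 0)).sub ((hasDerivWithinAt_id t _).smul_const (f' 0))).congr_deriv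
      (by rw [one_smul])
  have hasDeriv_bound (t : ℝ) : HasDerivAt (fun t ↦ C / 2 * t ^ 2) (C * t) t :=
    ((hasDerivAt_pow 2 t).const_mul (C / 2)).congr_deriv (by norm_num; ring)
  simpa [remainder] using
    image_norm_le_of_norm_deriv_right_le_deriv_boundary (a := 0) (b := 1)
      (fun t ht ↦ (hasDeriv_remainder t ht).continuousWithinAt)
      (fun t ht ↦ (hasDeriv_remainder t (Set.Ico_subset_Icc_self ht)).mono_of_mem_nhdsWithin
        (Icc_mem_nhdsGE_of_mem ht))
      (by simp [remainder]) hasDeriv_bound hf' (Set.right_mem_Icc.2 zero_le_one)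

theorem norm_image_sub_sub_le_of_norm_hasFDerivWithinAt_sub_le [NormedSpace ℝ E] {f : E → F}
    {f' : E → E →L[ℝ] F} (hs : StarConvex ℝ x₀ s) (hf : ∀ y ∈ s, HasFDerivWithinAt f (f' y) s y)
    (hf' : ∀ y ∈ s, ‖f' y - f' x₀‖ ≤ L * ‖y - x₀‖) (hx : x ∈ s) :
    ‖f x - f x₀ - f' x₀ (x - x₀)‖ ≤ L / 2 * ‖x - x₀‖ ^ 2 := by
  let path : ℝ → E := AffineMap.lineMap x₀ x
  have maps : Set.MapsTo path (Set.Icc 0 1) s := by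
    intro t ht
    apply hs.segment_subset hx
    rw [segment_eq_image_lineMap]
    exact Set.mem_image_of_mem _ ht
  have hasDeriv_path : ∀ t ∈ Set.Icc (0 : ℝ) 1,
      HasDerivWithinAt (f ∘ path) (f' (path t) (x - x₀)) (Set.Icc 0 1) t := fun t ht ↦
    (hf (path t) (maps ht)).comp_hasDerivWithinAt t AffineMap.hasDerivWithinAt_lineMap maps
  have norm_deriv_sub_le : ∀ t ∈ Set.Ico (0 : ℝ) 1,
      ‖f' (path t) (x - x₀) - f' (path 0) (x - x₀)‖ ≤ L * ‖x - x₀‖ ^ 2 * t := by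
    intro t ht
    have path_zero : path 0 = x₀ := AffineMap.lineMap_apply_zero x₀ x
    have norm_path_sub : ‖path t - x₀‖ = t * ‖x - x₀‖ := by
      simp [path, AffineMap.lineMap_apply, norm_smul, abs_of_nonneg ht.1]
    calc ‖f' (path t) (x - x₀) - f' (path 0) (x - x₀)‖
        = ‖(f' (path t) - f' x₀) (x - x₀)‖ := by rw [path_zero, _root_.sub_apply]
      _ ≤ L * ‖path t - x₀‖ * ‖x - x₀‖ :=
          ContinuousLinearMap.le_of_opNorm_le _ (hf' _ (maps (Set.Ico_subset_Icc_self ht))) _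
      _ = L * ‖x - x₀‖ ^ 2 * t := by rw [norm_path_sub]; ring
  have remainder_le :=
    norm_image_sub_sub_le_of_norm_hasDerivWithinAt_sub_le_segment_01 hasDeriv_path norm_deriv_sub_le
  simpa [path, div_mul_eq_mul_div] using remainder_le

theorem abs_image_sub_sub_inner_le_of_norm_hasGradientWithinAt_sub_le [InnerProductSpace ℝ E]
    [CompleteSpace E] {f : E → ℝ} {g : E → E} (hs : StarConvex ℝ x₀ s)
    (hf : ∀ y ∈ s, HasGradientWithinAt f (g y) s y)
    (hg : ∀ y ∈ s, ‖g y - g x₀‖ ≤ L * ‖y - x₀‖) (hx : x ∈ s) :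
    |f x - f x₀ - inner ℝ (g x₀) (x - x₀)| ≤ L / 2 * ‖x - x₀‖ ^ 2 := by
  have hdual : ∀ y ∈ s, ‖InnerProductSpace.toDual ℝ E (g y) - InnerProductSpace.toDual ℝ E (g x₀)‖
      ≤ L * ‖y - x₀‖ := by
    simpa only [← map_sub, LinearIsometryEquiv.norm_map] using hg
  simpa using norm_image_sub_sub_le_of_norm_hasFDerivWithinAt_sub_le hs
    (fun y hy ↦ (hf y hy).hasFDerivWithinAt) hdual hx

end Taylor

theorem piLp_two_norm_le_mul_sqrt_card {ι : Type*} [Fintype ι] {β : ι → Type*}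
    [∀ i, SeminormedAddCommGroup (β i)] {r : PiLp 2 β} {C : ℝ} (hC : 0 ≤ C) (hr : ∀ j, ‖r j‖ ≤ C) :
    ‖r‖ ≤ C * √(Fintype.card ι) := by
  refine le_of_sq_le_sq ?_ (by positivity)
  calc ‖r‖ ^ 2 = ∑ j, ‖r j‖ ^ 2 := PiLp.norm_sq_eq_of_L2 β r
    _ ≤ ∑ _j : ι, C ^ 2 := by gcongr with j; exact hr j
    _ = (C * √(Fintype.card ι)) ^ 2 := by
      rw [mul_pow, Real.sq_sqrt (by positivity)]
      simp [mul_comm]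

theorem inner_toLp_col_eq_transpose_mulVec {κ ι : Type*} [Fintype κ] (A : Matrix κ ι ℝ)
    (u : EuclideanSpace ℝ κ) (j : ι) :
    inner ℝ u (WithLp.toLp 2 (A.col j)) = (Aᵀ *ᵥ u) j := by
  simp [PiLp.inner_apply, Matrix.mulVec, dotProduct]

section Simplex

variable {R ι : Type*} [CommRing R] [DecidableEq ι]

variable (ι) in
/-- The matrix `V = α (I - γ e eᵀ)`. If `α² = (n + 1) / n` and `(1 - n γ)² = 1 / (n + 1)`,
where `n` is the cardinality of `ι`, its columns are all but one of the vertices of a regular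
simplex of radius `1` centred at the origin. The vector `e` is the constant `1 : ι → R`. -/
def alignedBasis (α γ : R) : Matrix ι ι R :=
  α • (1 - γ • vecMulVec 1 1)

theorem alignedBasis_apply (α γ : R) (i k : ι) :
    alignedBasis ι α γ i k = α * ((if i = k then 1 else 0) - γ) := by
  simp [alignedBasis, one_apply]

variable [Fintype ι]

theorem alignedBasis_mulVec_one (α γ : R) (i : ι) :
    (alignedBasis ι α γ *ᵥ 1) i = α * (1 - Fintype.card ι * γ) := by
  simp [mulVec, dotProduct, alignedBasis_apply, ← Finset.mul_sum]

theorem sum_alignedBasis_sq (α γ : R) (k : ι) :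
    ∑ i, alignedBasis ι α γ i k ^ 2 = α ^ 2 * (1 - 2 * γ + Fintype.card ι * γ ^ 2) := by
  have entry_sq (i : ι) : alignedBasis ι α γ i k ^ 2 =
      α ^ 2 * ((if i = k then 1 - 2 * γ else 0) + γ ^ 2) := by
    rw [alignedBasis_apply]
    split_ifs <;> ring
  simp [entry_sq, ← Finset.mul_sum, Finset.sum_add_distrib]

/-- The matrix `V₊ = [V, -V e]`: the extra last column makes the columns sum to zero, that is, it
completes the columns of `V` to the vertices of a simplex centred at the origin. -/
def appendNegSum {κ : Type*} {n : ℕ} (V : Matrix κ (Fin n) R) : Matrix κ (Fin (n + 1)) R :=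
  of fun i ↦ Fin.snoc (V i) (-(V *ᵥ 1) i)

theorem sq_one_sub_mul_eq_one_div {N γ : ℝ} (hN : 0 < N)
    (hγ : γ = (1 / N) * (1 - 1 / √(N + 1)) ∨ γ = (1 / N) * (1 + 1 / √(N + 1))) :
    (1 - N * γ) ^ 2 = 1 / (N + 1) := by
  have inv_sqrt_sq : (1 / √(N + 1)) ^ 2 = 1 / (N + 1) := by
    rw [div_pow, Real.sq_sqrt (by positivity), one_pow]
  rw [← inv_sqrt_sq]
  rcases hγ with rfl | rfl <;> field_simp <;> ring

theorem norm_col_appendNegSum_alignedBasis {n : ℕ} (hn : n ≠ 0) {α γ : ℝ}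
    (hα : α ^ 2 = (n + 1) / n) (hγ : (1 - n * γ) ^ 2 = 1 / (n + 1)) (j : Fin (n + 1)) :
    ‖WithLp.toLp 2 ((appendNegSum (alignedBasis (Fin n) α γ)).col j)‖ = 1 := by
  have hn0 : (n : ℝ) ≠ 0 := Nat.cast_ne_zero.2 hn
  rw [← sq_eq_sq₀ (norm_nonneg _) zero_le_one, EuclideanSpace.real_norm_sq_eq]
  cases j using Fin.lastCases with
  | last =>
    have : ∑ _i : Fin n, (-(α * (1 - n * γ))) ^ 2 = 1 ^ 2 := by
      simp only [neg_sq, mul_pow, hα, hγ, Finset.sum_const, Finset.card_univ, Fintype.card_fin,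
        nsmul_eq_mul]
      field_simp
    simpa [appendNegSum, alignedBasis_mulVec_one] using this
  | cast k =>
    have complete_square : 1 - 2 * γ + n * γ ^ 2 = (n - 1 + (1 - n * γ) ^ 2) / n := by
      field_simp
      ring
    have : α ^ 2 * (1 - 2 * γ + n * γ ^ 2) = 1 ^ 2 := by
      rw [complete_square, hα, hγ]
      field_simp
      ring
    simpa [appendNegSum, sum_alignedBasis_sq] using this

end Simplex

theorem stmt_14_general {κ ι : Type*} [Fintype κ] [Fintype ι] {A : Matrix κ ι ℝ}
    (hA : ∀ j, ‖WithLp.toLp 2 (A.col j)‖ ≤ 1) {h L : ℝ} (hh : 0 ≤ h) (hL : 0 ≤ L)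
    {x₀ : EuclideanSpace ℝ κ} {x : ι → EuclideanSpace ℝ κ}
    (hx : ∀ j i, x j i = x₀ i + h * A i j)
    {f : EuclideanSpace ℝ κ → ℝ} {g : EuclideanSpace ℝ κ → EuclideanSpace ℝ κ}
    (hf : ∀ y ∈ Metric.closedBall x₀ h, HasGradientWithinAt f (g y) (Metric.closedBall x₀ h) y)
    (hg : ∀ y ∈ Metric.closedBall x₀ h, ‖g y - g x₀‖ ≤ L * ‖y - x₀‖)
    {r : EuclideanSpace ℝ ι} (hr : ∀ j, r j = f (x j) - f x₀ - h * (Aᵀ *ᵥ g x₀) j) :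
    ‖r‖ ≤ 1 / 2 * L * h ^ 2 * √(Fintype.card ι) := by
  refine piLp_two_norm_le_mul_sqrt_card (by positivity) fun j ↦ ?_
  have x_sub : x j - x₀ = h • WithLp.toLp 2 (A.col j) := by
    ext i
    simp [hx]
  have norm_x_sub : ‖x j - x₀‖ ≤ h := by
    rw [x_sub, norm_smul, Real.norm_of_nonneg hh]
    exact mul_le_of_le_one_right hh (hA j)
  have r_eq : r j = f (x j) - f x₀ - inner ℝ (g x₀) (x j - x₀) := by
    rw [hr, x_sub, inner_smul_right, inner_toLp_col_eq_transpose_mulVec]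
  calc ‖r j‖ ≤ L / 2 * ‖x j - x₀‖ ^ 2 := by
        rw [r_eq]
        exact abs_image_sub_sub_inner_le_of_norm_hasGradientWithinAt_sub_le
          ((convex_closedBall x₀ h).starConvex (Metric.mem_closedBall_self hh)) hf hg
          (mem_closedBall_iff_norm.2 norm_x_sub)
    _ ≤ L / 2 * h ^ 2 := by gcongr
    _ = 1 / 2 * L * h ^ 2 := by ring

/-- Taylor residual bound for the aligned regular simplex: the
vector with entries `f(x_j) − f(x₀)` satisfies
`‖δf₊ − h V₊ᵀ ∇f(x₀)‖₂ ≤ (1/2) L h² √(n+1)`. -/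
theorem stmt_14 (n : ℕ) (hn : 1 ≤ n)
    (α γ h L : ℝ) (hh : 0 < h) (hL : 0 < L)
    (hα : α = Real.sqrt ((n + 1) / n))
    (hγ : γ = (1 / n) * (1 - 1 / Real.sqrt (n + 1)) ∨
          γ = (1 / n) * (1 + 1 / Real.sqrt (n + 1)))
    (e : Fin n → ℝ) (he : e = fun _ => 1)
    (V : Matrix (Fin n) (Fin n) ℝ)
    (hV : V = α • ((1 : Matrix (Fin n) (Fin n) ℝ) - γ • Matrix.vecMulVec e e))
    (Vp : Matrix (Fin n) (Fin (n + 1)) ℝ)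
    (hVp : ∀ (i : Fin n) (j : Fin (n + 1)),
      Vp i j = if hj : (j : ℕ) < n then V i ⟨j, hj⟩ else -(V.mulVec e i))
    (x₀ : EuclideanSpace ℝ (Fin n))
    (x : Fin (n + 1) → EuclideanSpace ℝ (Fin n))
    (hx : ∀ (j : Fin (n + 1)) (i : Fin n), x j i = x₀ i + h * Vp i j)
    (f : EuclideanSpace ℝ (Fin n) → ℝ)
    (Ω : Set (EuclideanSpace ℝ (Fin n)))
    (hΩopen : IsOpen Ω)
    (hball : Metric.closedBall x₀ h ⊆ Ω)
    (hf : ContDiffOn ℝ 1 f Ω)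
    (hLip : ∀ y ∈ Ω, ∀ z ∈ Ω, ‖gradient f y - gradient f z‖ ≤ L * ‖y - z‖)
    (δ : Fin (n + 1) → ℝ)
    (hδ : ∀ j, δ j = f (x j) - f x₀)
    (r : EuclideanSpace ℝ (Fin (n + 1)))
    (hr : ∀ j, r j = δ j - h * Vpᵀ.mulVec (fun i => gradient f x₀ i) j) :
    ‖r‖ ≤ (1 / 2) * L * h ^ 2 * Real.sqrt (n + 1) := by
  have hn0 : (0 : ℝ) < n := Nat.cast_pos.2 hn
  have hα_sq : α ^ 2 = (n + 1) / n := by rw [hα, Real.sq_sqrt (by positivity)]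
  have Vp_eq : Vp = appendNegSum (alignedBasis (Fin n) α γ) := by
    subst hV he
    ext i j
    exact hVp i j
  have norm_col_le (j) : ‖WithLp.toLp 2 (Vp.col j)‖ ≤ 1 := by
    rw [Vp_eq, norm_col_appendNegSum_alignedBasis (by lia) hα_sq (sq_one_sub_mul_eq_one_div hn0 hγ)]
  have hasGradient (y) (hy : y ∈ Metric.closedBall x₀ h) :
      HasGradientWithinAt f (gradient f y) (Metric.closedBall x₀ h) y :=
    ((hf.differentiableOn one_ne_zero).hasGradientAt
      (hΩopen.mem_nhds (hball hy))).hasFDerivAt.hasFDerivWithinAt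
  simpa using stmt_14_general norm_col_le hh.le hL.le hx hasGradient
    (fun y hy ↦ hLip y (hball hy) x₀ (hball (Metric.mem_closedBall_self hh.le)))
    (fun j ↦ by rw [hr, hδ])
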